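/- For all integers m ≥ n ≥ 6, the product P(m,n) = ∏_{i=1}^{n}(m+i) of n consecutive integers each strictly greater than n is divisible by at least two distinct primes strictly greater than n. -/

import Mathlib

/-- `P m n = ∏_{i=1}^n (m+i)`. -/
def P (m n : ℕ) : ℕ := ∏ i ∈ Finset.Icc 1 n, (m + i)

/-!
Delete from the factors `m + i` one in which `q` has its largest exponent, for each prime
`q ∣ P m n`. In the remaining product the exponent of `q` is at most that in `(n - 1)!`, so the
product divides `(n - 1)!` (Sylvester, Erdős). If at most one prime exceeds `n`, at least
`n - π n - 1` factors remain, and `(m + 1) ^ (n - π n - 1) ≤ (n - 1)!` forces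
`m < (n / 2) ^ (3 / 2)` for `n ≥ 48`. For `m ≤ 2 ^ 15` the gaps between primes are so short that
`(m, m + n]` then contains two of them. For larger `m`, put `N = m + n`: a prime power dividing
`N.choose n` is at most `N`, and primes above `√N` divide it at most once, so that
`N.choose n ≤ 4 ^ T * N ^ (π √N + 1)`, where `T` bounds its prime factors up to `n`.
Take `T = n`, or `T = N / 3` if `3 * N ≤ 8 * n`; then `4 ^ T` is exponentially smaller than
`N.choose n`, while `N ^ (π √N + 1)` is negligible.
-/

open Finset
open scoped Nat Nat.Prime

/-- The primes exceeding `n` that divide `P m n`. -/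
def largePrimeFactors (m n : ℕ) : Finset ℕ := {p ∈ (P m n).primeFactors | n < p}

lemma P_ne_zero (m n : ℕ) : P m n ≠ 0 :=
  prod_ne_zero_iff.mpr fun i hi ↦ by have := (mem_Icc.mp hi).1; omega

lemma P_eq_ascFactorial (m n : ℕ) : P m n = (m + 1).ascFactorial n := by
  rw [P, Nat.ascFactorial_eq_prod_range, ← Ico_succ_right_eq_Icc, prod_Ico_eq_prod_range]
  simp [add_assoc]

lemma P_eq_factorial_mul_choose (m n : ℕ) : P m n = n ! * (m + n).choose n := by
  rw [P_eq_ascFactorial, Nat.ascFactorial_eq_factorial_mul_choose]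

lemma dvd_P {m n k : ℕ} (hmk : m < k) (hkn : k ≤ m + n) : k ∣ P m n := by
  obtain ⟨i, rfl⟩ := Nat.exists_eq_add_of_le hmk.le
  exact dvd_prod_of_mem (m + ·) (mem_Icc.mpr ⟨by omega, by omega⟩)

lemma mem_largePrimeFactors {m n p : ℕ} :
    p ∈ largePrimeFactors m n ↔ p.Prime ∧ p ∣ P m n ∧ n < p := by
  simp [largePrimeFactors, P_ne_zero, and_assoc]

lemma card_filter_primeFactors_le_primeCounting (a k : ℕ) :
    #{p ∈ a.primeFactors | p ≤ k} ≤ π k := by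
  rw [← Nat.primesLE_card_eq_primeCounting]
  refine card_le_card fun p hp ↦ ?_
  obtain ⟨hpa, hpk⟩ := mem_filter.mp hp
  exact Nat.mem_primesLE.mpr ⟨hpk, Nat.prime_of_mem_primeFactors hpa⟩

lemma card_primeFactors_P_le (m n : ℕ) :
    #(P m n).primeFactors ≤ π n + #(largePrimeFactors m n) := by
  rw [largePrimeFactors, ← card_filter_add_card_filter_not (n < ·), add_comm]
  simp only [not_lt]
  gcongr
  exact card_filter_primeFactors_le_primeCounting _ _

lemma prod_erase_dist {n j : ℕ} (hj : j ∈ Icc 1 n) :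
    ∏ i ∈ (Icc 1 n).erase j, Nat.dist i j = (j - 1)! * (n - j)! := by
  have hsplit : (Icc 1 n).erase j = Ico 1 j ∪ Ico (j + 1) (n + 1) := by
    ext i
    simp only [mem_erase, mem_Icc, mem_union, mem_Ico] at hj ⊢
    omega
  have hdisj : Disjoint (Ico 1 j) (Ico (j + 1) (n + 1)) :=
    Ico_disjoint_Ico_consecutive 1 j (n + 1) |>.mono_right (Ico_subset_Ico_left j.le_succ)
  rw [hsplit, prod_union hdisj]
  congr 1
  · rw [← prod_range_add_one_eq_factorial, ← prod_range_reflect, prod_Ico_eq_prod_range]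
    refine prod_congr rfl fun i hi ↦ ?_
    have := mem_range.mp hi
    rw [Nat.dist_eq_sub_of_le] <;> omega
  · rw [← prod_range_add_one_eq_factorial, prod_Ico_eq_prod_range, Nat.add_sub_add_right]
    refine prod_congr rfl fun i _ ↦ ?_
    rw [Nat.dist_eq_sub_of_le_right] <;> omega

-- `j` maximizes the exponent of `q` in `m + j`, so that the power of `q` in any other `m + i`
-- also divides `i - j`.
lemma exists_factorization_prod_erase_le (m q : ℕ) {n : ℕ} (hn : 0 < n) :
    ∃ j, (∏ i ∈ (Icc 1 n).erase j, (m + i)).factorization q ≤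
      (n - 1)!.factorization q := by
  obtain ⟨j, hj, hmax⟩ := exists_max_image (Icc 1 n) (fun i ↦ (m + i).factorization q)
    (nonempty_Icc.mpr hn)
  refine ⟨j, ?_⟩
  by_cases hq : q.Prime
  swap
  · simp [Nat.factorization_eq_zero_of_not_prime _ hq]
  have hdist : ∀ i ∈ (Icc 1 n).erase j, q ^ (m + i).factorization q ∣ Nat.dist i j := by
    intro i hi
    have hdvd_i : q ^ (m + i).factorization q ∣ m + i := Nat.ordProj_dvd _ _
    have hdvd_j : q ^ (m + i).factorization q ∣ m + j :=
      (pow_dvd_pow q (hmax i (mem_of_mem_erase hi))).trans (Nat.ordProj_dvd _ _)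
    rw [← Nat.dist_add_add_left m i j]
    exact dvd_add (Nat.dvd_sub hdvd_i hdvd_j) (Nat.dvd_sub hdvd_j hdvd_i)
  rw [← hq.pow_dvd_iff_le_factorization (Nat.factorial_ne_zero _)]
  have hne : ∀ i ∈ (Icc 1 n).erase j, m + i ≠ 0 := fun i hi ↦ by
    have := (mem_Icc.mp (mem_of_mem_erase hi)).1
    omega
  calc q ^ (∏ i ∈ (Icc 1 n).erase j, (m + i)).factorization q
      = ∏ i ∈ (Icc 1 n).erase j, q ^ (m + i).factorization q := by
        rw [Nat.factorization_prod hne, sum_apply', prod_pow_eq_pow_sum]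
    _ ∣ ∏ i ∈ (Icc 1 n).erase j, Nat.dist i j := prod_dvd_prod_of_dvd _ _ hdist
    _ = (j - 1)! * (n - j)! := prod_erase_dist hj
    _ ∣ (n - 1)! := by
        have hj' := mem_Icc.mp hj
        have := Nat.factorial_mul_factorial_dvd_factorial (n := n - 1) (k := j - 1) (by omega)
        rwa [show n - 1 - (j - 1) = n - j by omega] at this

lemma exists_subset_prod_dvd_factorial (m : ℕ) {n : ℕ} (hn : 0 < n) :
    ∃ T ⊆ Icc 1 n, n - #(P m n).primeFactors ≤ #T ∧ ∏ i ∈ T, (m + i) ∣ (n - 1)! := by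
  choose f hfactor using fun q ↦ exists_factorization_prod_erase_le m q hn
  have hne : ∀ {S : Finset ℕ}, S ⊆ Icc 1 n → ∏ i ∈ S, (m + i) ≠ 0 := fun hS ↦
    ne_zero_of_dvd_ne_zero (P_ne_zero m n) (prod_dvd_prod_of_subset _ _ _ hS)
  refine ⟨Icc 1 n \ (P m n).primeFactors.image f, sdiff_subset, ?_, ?_⟩
  · have hsdiff := le_card_sdiff ((P m n).primeFactors.image f) (Icc 1 n)
    have himage : #((P m n).primeFactors.image f) ≤ #(P m n).primeFactors := card_image_le
    rw [Nat.card_Icc] at hsdiff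
    omega
  rw [← Nat.factorization_le_iff_dvd (hne sdiff_subset) (Nat.factorial_ne_zero _)]
  intro q
  by_cases hq : q ∈ (P m n).primeFactors
  · refine le_trans ?_ (hfactor q)
    have hsub : Icc 1 n \ (P m n).primeFactors.image f ⊆ (Icc 1 n).erase (f q) :=
      fun i hi ↦ mem_erase.mpr
        ⟨fun h ↦ (mem_sdiff.mp hi).2 (h ▸ mem_image_of_mem f hq), (mem_sdiff.mp hi).1⟩
    exact (Nat.factorization_le_iff_dvd (hne sdiff_subset) (hne (erase_subset _ _))).mpr
      (prod_dvd_prod_of_subset _ _ _ hsub) q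
  · have hP : (P m n).factorization q = 0 := by
      rwa [← Finsupp.notMem_support_iff, Nat.support_factorization]
    have hdvd : ∏ i ∈ Icc 1 n \ (P m n).primeFactors.image f, (m + i) ∣ P m n :=
      prod_dvd_prod_of_subset _ _ _ sdiff_subset
    have hle := (Nat.factorization_le_iff_dvd (hne sdiff_subset) (P_ne_zero m n)).mpr hdvd q
    exact (hle.trans hP.le).trans (Nat.zero_le _)

lemma succ_pow_le_factorial (m : ℕ) {n : ℕ} (hn : 0 < n) :
    (m + 1) ^ (n - (π n + #(largePrimeFactors m n))) ≤ (n - 1)! := by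
  obtain ⟨T, hT, hcard, hdvd⟩ := exists_subset_prod_dvd_factorial m hn
  have hexp : n - (π n + #(largePrimeFactors m n)) ≤ #T :=
    (Nat.sub_le_sub_left (card_primeFactors_P_le m n) n).trans hcard
  calc (m + 1) ^ (n - (π n + #(largePrimeFactors m n))) ≤ (m + 1) ^ #T :=
        Nat.pow_le_pow_right m.succ_pos hexp
    _ ≤ ∏ i ∈ T, (m + i) :=
        pow_card_le_prod _ _ _ fun i hi ↦ Nat.add_le_add_left (mem_Icc.mp (hT hi)).1 m
    _ ≤ (n - 1)! := Nat.le_of_dvd (Nat.factorial_pos _) hdvd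

lemma two_pow_mul_factorial_le (n : ℕ) : 2 ^ n * n ! ≤ (n + 1) ^ n := by
  induction n with
  | zero => simp
  | succ n ih =>
    have hbernoulli : 2 * (n + 1) ^ (n + 1) ≤ (n + 2) ^ (n + 1) := by
      have h := pow_add_mul_le_add_pow (a := n + 1) (b := 1) (Nat.zero_le _) (Nat.zero_le _) (n + 1)
      rw [Nat.cast_id, Nat.add_sub_cancel, mul_one, ← pow_succ'] at h
      rwa [two_mul]
    calc 2 ^ (n + 1) * (n + 1)! = 2 * (n + 1) * (2 ^ n * n !) := by
          rw [Nat.factorial_succ]; ring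
      _ ≤ 2 * (n + 1) * (n + 1) ^ n := by gcongr
      _ = 2 * (n + 1) ^ (n + 1) := by ring
      _ ≤ (n + 2) ^ (n + 1) := hbernoulli

lemma three_mul_primeCounting_add_one_le {n : ℕ} (hn : 48 ≤ n) : 3 * (π n + 1) ≤ n := by
  rcases lt_or_ge n 60 with h | h
  · have hcheck : ∀ n < 60, 48 ≤ n → 3 * (π n + 1) ≤ n := by decide +kernel
    exact hcheck n h hn
  · have hwheel := Nat.primeCounting_add_le (a := 6) (k := 60) (by norm_num) (by norm_num) (n - 60)
    have h60 : π 60 = 17 := by decide +kernel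
    have h6 : φ 6 = 2 := by decide
    rw [h60, h6, Nat.add_sub_cancel' h] at hwheel
    omega

lemma primeCounting_le_half_add_one (n : ℕ) : π n ≤ n / 2 + 1 := by
  rcases lt_or_ge n 2 with h | h
  · interval_cases n <;> simp
  · have hwheel := Nat.primeCounting_add_le (a := 2) (k := 2) (by norm_num) le_rfl (n - 2)
    have h2 : π 2 = 1 := by decide
    rw [h2, Nat.totient_two, Nat.add_sub_cancel' h] at hwheel
    omega

lemma eight_mul_succ_sq_le_pow_three {m n : ℕ} (hn : 48 ≤ n)
    (hlarge : #(largePrimeFactors m n) ≤ 1) : 8 * (m + 1) ^ 2 ≤ n ^ 3 := by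
  have hpi := three_mul_primeCounting_add_one_le hn
  have hfact : 2 ^ (n - 1) * (n - 1)! ≤ n ^ (n - 1) := by
    simpa [Nat.sub_add_cancel (by omega : 1 ≤ n)] using two_pow_mul_factorial_le (n - 1)
  have hpow : (m + 1) ^ (2 * n) ≤ (n - 1)! ^ 3 :=
    calc (m + 1) ^ (2 * n) ≤ (m + 1) ^ ((n - (π n + #(largePrimeFactors m n))) * 3) :=
          Nat.pow_le_pow_right m.succ_pos (by omega)
      _ = ((m + 1) ^ (n - (π n + #(largePrimeFactors m n)))) ^ 3 := pow_mul _ _ _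
      _ ≤ (n - 1)! ^ 3 := Nat.pow_le_pow_left (succ_pow_le_factorial m (by omega)) 3
  have h8 : 8 ≤ n ^ 3 := (by norm_num : 8 ≤ 48 ^ 3).trans (Nat.pow_le_pow_left hn 3)
  rw [← Nat.pow_le_pow_iff_left (by omega : n ≠ 0)]
  calc (8 * (m + 1) ^ 2) ^ n = 8 * 8 ^ (n - 1) * (m + 1) ^ (2 * n) := by
        rw [mul_pow, ← pow_mul, mul_pow_sub_one (by omega)]
    _ ≤ n ^ 3 * 8 ^ (n - 1) * (n - 1)! ^ 3 := by gcongr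
    _ = n ^ 3 * (2 ^ (n - 1) * (n - 1)!) ^ 3 := by
        rw [mul_pow, ← pow_mul, mul_comm (n - 1) 3, pow_mul 2 3]; ring
    _ ≤ n ^ 3 * (n ^ (n - 1)) ^ 3 := by gcongr
    _ = (n ^ 3) ^ n := by
        rw [← mul_pow, mul_pow_sub_one (by omega), pow_right_comm]

lemma filter_Ioc_subset_largePrimeFactors (m n : ℕ) :
    {p ∈ Ioc n (m + n) | m / p < (m + n) / p ∧ p.Prime} ⊆ largePrimeFactors m n := by
  intro p hp
  obtain ⟨hpn, hdiv, hprime⟩ := mem_filter.mp hp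
  refine mem_largePrimeFactors.mpr ⟨hprime, ?_, (mem_Ioc.mp hpn).1⟩
  have hlt : m < p * ((m + n) / p) :=
    (Nat.lt_mul_div_succ m hprime.pos).trans_le (Nat.mul_le_mul_left p hdiv)
  exact (dvd_mul_right p _).trans (dvd_P hlt (Nat.mul_div_le _ _))

lemma one_lt_card_largePrimeFactors_of_lt_48 {m n : ℕ} (hmn : n ≤ m) (h6 : 6 ≤ n) (h48 : n < 48) :
    1 < #(largePrimeFactors m n) := by
  by_contra! hlarge
  have hpow : (m + 1) ^ (n - (π n + 1)) ≤ (n - 1)! :=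
    (Nat.pow_le_pow_right m.succ_pos (by omega)).trans (succ_pow_le_factorial m (by omega))
  have hbound : ∀ n < 48, 6 ≤ n → (n - 1)! < 74 ^ (n - (π n + 1)) := by decide +kernel
  have hm : m < 73 := by
    by_contra! hm
    exact (hbound n h48 h6).not_ge ((Nat.pow_le_pow_left (by omega) _).trans hpow)
  have hcheck : ∀ n < 48, 6 ≤ n → ∀ m < 73, n ≤ m → (m + 1) ^ (n - (π n + 1)) ≤ (n - 1)! →
      1 < #{p ∈ Ioc n (m + n) | m / p < (m + n) / p ∧ p.Prime} := by decide +kernel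
  exact hlarge.not_gt <| (hcheck n h48 h6 m hm hmn hpow).trans_le
    (card_le_card (filter_Ioc_subset_largePrimeFactors m n))

lemma exists_rel_le_lt_of_isChain {α : Type*} [LinearOrder α] {R : α → α → Prop} {x : α} :
    ∀ {a : α} {l : List α}, (a :: l).IsChain R → a ≤ x → (∃ b ∈ l, x < b) →
      ∃ c, ∃ b ∈ l, R c b ∧ c ≤ x ∧ x < b
  | a, b :: l, hchain, ha, hex => by
    obtain ⟨hab, htail⟩ := List.isChain_cons_cons.mp hchain
    rcases lt_or_ge x b with hb | hb
    · exact ⟨a, b, List.mem_cons_self, hab, ha, hb⟩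
    · have hex' : ∃ b ∈ l, x < b := by simpa [hb.not_gt] using hex
      obtain ⟨c, d, hd, hcd⟩ := exists_rel_le_lt_of_isChain htail hb hex'
      exact ⟨c, d, List.mem_cons_of_mem b hd, hcd⟩

/-- An increasing list of primes whose gaps satisfy `3 (q - p) ^ 3 ≤ p ^ 2`: each entry is the
largest prime which this inequality allows after its predecessor, starting from `48`. -/
def primeLadder : List ℕ :=
  [53, 61, 71, 79, 89, 101, 113, 127, 139, 157, 173, 193, 211, 233, 257, 283, 311, 337, 367, 401,
    433, 467, 503, 541, 587, 631, 677, 727, 773, 829, 887, 947, 1013, 1069, 1129, 1201, 1279,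
    1327, 1409, 1493, 1583, 1669, 1759, 1847, 1951, 2053, 2161, 2273, 2389, 2503, 2621, 2749,
    2879, 3019, 3163, 3307, 3457, 3613, 3769, 3931, 4099, 4273, 4451, 4637, 4817, 5011, 5209,
    5417, 5623, 5839, 6053, 6277, 6491, 6719, 6961, 7213, 7459, 7723, 7993, 8269, 8543, 8831,
    9127, 9421, 9721, 10009, 10331, 10657, 10987, 11329, 11677, 12011, 12373, 12743, 13121, 13499,
    13883, 14281, 14683, 15091, 15511, 15937, 16369, 16811, 17257, 17713, 18181, 18637, 19121,
    19609, 20113, 20611, 21121, 21649, 22171, 22717, 23269, 23833, 24407, 24989, 25579, 26177,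
    26783, 27397, 28027, 28663, 29311, 29959, 30593, 31271, 31957, 32653, 33359, 34061]

lemma prime_of_mem_primeLadder : ∀ p ∈ primeLadder, p.Prime := by
  unfold primeLadder
  norm_num

lemma isChain_primeLadder :
    (48 :: primeLadder).IsChain fun p q ↦ 3 * (q - p) ^ 3 ≤ p ^ 2 := by
  decide +kernel

lemma exists_prime_lt_and_three_mul_sub_pow_three_le {x : ℕ} (hx : 48 ≤ x)
    (hx' : x ≤ 2 ^ 15 + 2 ^ 10) : ∃ p, p.Prime ∧ x < p ∧ 3 * (p - x) ^ 3 ≤ x ^ 2 := by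
  have hlast : 34061 ∈ primeLadder := by decide +kernel
  obtain ⟨c, p, hp, hcp, hcx, hxp⟩ :=
    exists_rel_le_lt_of_isChain isChain_primeLadder hx ⟨34061, hlast, by omega⟩
  refine ⟨p, prime_of_mem_primeLadder p hp, hxp, ?_⟩
  calc 3 * (p - x) ^ 3 ≤ 3 * (p - c) ^ 3 := by gcongr
    _ ≤ c ^ 2 := hcp
    _ ≤ x ^ 2 := by gcongr

lemma one_lt_card_largePrimeFactors_of_primes {m n p q : ℕ} (hmn : n ≤ m) (hp : p.Prime)
    (hq : q.Prime) (hmp : m < p) (hpq : p < q) (hqn : q ≤ m + n) :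
    1 < #(largePrimeFactors m n) :=
  one_lt_card.mpr
    ⟨p, mem_largePrimeFactors.mpr ⟨hp, dvd_P hmp (by omega), by omega⟩,
      q, mem_largePrimeFactors.mpr ⟨hq, dvd_P (by omega) hqn, by omega⟩, hpq.ne⟩

lemma one_lt_card_largePrimeFactors_of_le_two_pow {m n : ℕ} (hmn : n ≤ m) (hn : 48 ≤ n)
    (hm : m ≤ 2 ^ 15) : 1 < #(largePrimeFactors m n) := by
  by_contra! hlarge
  have hmn3 : 8 * m ^ 2 ≤ n ^ 3 :=
    le_trans (by gcongr; omega) (eight_mul_succ_sq_le_pow_three hn hlarge)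
  obtain ⟨p, hp, hmp, hpgap⟩ :=
    exists_prime_lt_and_three_mul_sub_pow_three_le (hn.trans hmn) (by omega)
  obtain ⟨x, rfl⟩ := Nat.exists_eq_add_of_le hmp.le
  rw [Nat.add_sub_cancel_left] at hpgap
  have hx : 2 * x ≤ n := by
    rw [← Nat.pow_le_pow_iff_left three_ne_zero]
    rw [mul_pow]
    omega
  have hxm : 2 * x ≤ m := hx.trans hmn
  have hx10 : x ≤ 2 ^ 10 := by
    by_contra! h
    have := Nat.pow_le_pow_left h.le 3
    have := Nat.pow_le_pow_left hm 2
    omega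
  obtain ⟨q, hq, hpq, hqgap⟩ :=
    exists_prime_lt_and_three_mul_sub_pow_three_le (x := m + x) (by omega) (by omega)
  obtain ⟨y, rfl⟩ := Nat.exists_eq_add_of_le hpq.le
  rw [Nat.add_sub_cancel_left] at hqgap
  have hy : 2 * y ≤ n := by
    have hsq : (2 * (m + x)) ^ 2 ≤ (3 * m) ^ 2 := Nat.pow_le_pow_left (by omega) 2
    rw [← Nat.pow_le_pow_iff_left three_ne_zero]
    rw [mul_pow] at hsq ⊢
    rw [mul_pow] at hsq
    omega
  exact hlarge.not_gt
    (one_lt_card_largePrimeFactors_of_primes hmn hp hq hmp hpq (by omega))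

lemma prod_le_four_pow {S : Finset ℕ} {T : ℕ} (hS : S ⊆ T.primesLE) : ∏ p ∈ S, p ≤ 4 ^ T :=
  calc ∏ p ∈ S, p ≤ ∏ p ∈ T.primesLE, p :=
        prod_le_prod_of_subset_of_one_le' hS fun _ hp _ ↦ (Nat.prime_of_mem_primesLE hp).one_le
    _ = primorial T := (primorial_eq_prod_primesLE T).symm
    _ ≤ 4 ^ T := primorial_le_four_pow T

lemma choose_le_four_pow_mul_pow {N k T : ℕ} (hN : 0 < N) (hk : k ≤ N)
    (hT : ∀ p ∈ (N.choose k).primeFactors, p ≤ k → p ≤ T) :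
    N.choose k ≤ 4 ^ T * N ^ (π N.sqrt + #{p ∈ (N.choose k).primeFactors | k < p}) := by
  set S := (N.choose k).primeFactors
  set A := {p ∈ S | p ≤ N.sqrt ∨ k < p}
  set B := {p ∈ S | ¬ (p ≤ N.sqrt ∨ k < p)}
  have hcardA : #A ≤ π N.sqrt + #{p ∈ S | k < p} :=
    calc #A = #({p ∈ S | p ≤ N.sqrt} ∪ {p ∈ S | k < p}) := by rw [← filter_or]
      _ ≤ #{p ∈ S | p ≤ N.sqrt} + #{p ∈ S | k < p} := card_union_le _ _
      _ ≤ π N.sqrt + #{p ∈ S | k < p} :=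
          Nat.add_le_add_right (card_filter_primeFactors_le_primeCounting _ _) _
  have hA : ∏ p ∈ A, p ^ (N.choose k).factorization p ≤
      N ^ (π N.sqrt + #{p ∈ S | k < p}) :=
    (prod_le_pow_card _ _ _ fun p _ ↦ Nat.pow_factorization_choose_le hN).trans
      (Nat.pow_le_pow_right hN hcardA)
  have hB : ∏ p ∈ B, p ^ (N.choose k).factorization p ≤ 4 ^ T := by
    have hmem : ∀ p ∈ B, p.Prime ∧ N < p ^ 2 ∧ p ≤ T := by
      intro p hp
      obtain ⟨hpS, hp⟩ := mem_filter.mp hp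
      push Not at hp
      exact ⟨Nat.prime_of_mem_primeFactors hpS, Nat.sqrt_lt'.mp hp.1, hT p hpS hp.2⟩
    calc ∏ p ∈ B, p ^ (N.choose k).factorization p ≤ ∏ p ∈ B, p :=
          prod_le_prod' fun p hp ↦ (Nat.pow_le_pow_right (hmem p hp).1.pos
            (Nat.factorization_choose_le_one (hmem p hp).2.1)).trans_eq (pow_one p)
      _ ≤ 4 ^ T := prod_le_four_pow fun p hp ↦
          Nat.mem_primesLE.mpr ⟨(hmem p hp).2.2, (hmem p hp).1⟩
  calc N.choose k = ∏ p ∈ S, p ^ (N.choose k).factorization p :=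
        (Nat.prod_factorization_pow_eq_self (Nat.choose_pos hk).ne').symm
    _ = (∏ p ∈ A, p ^ (N.choose k).factorization p) *
          ∏ p ∈ B, p ^ (N.choose k).factorization p := (prod_filter_mul_prod_filter_not ..).symm
    _ ≤ N ^ (π N.sqrt + #{p ∈ S | k < p}) * 4 ^ T := Nat.mul_le_mul hA hB
    _ = _ := mul_comm _ _

lemma choose_le_of_card_largePrimeFactors_le_one {m n T : ℕ} (hn : 0 < n)
    (hlarge : #(largePrimeFactors m n) ≤ 1)
    (hT : ∀ p ∈ ((m + n).choose n).primeFactors, p ≤ n → p ≤ T) :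
    (m + n).choose n ≤ 4 ^ T * (m + n) ^ (π (m + n).sqrt + 1) := by
  have hsub : {p ∈ ((m + n).choose n).primeFactors | n < p} ⊆ largePrimeFactors m n :=
    filter_subset_filter _ (Nat.primeFactors_mono
      (P_eq_factorial_mul_choose m n ▸ dvd_mul_left _ _) (P_ne_zero m n))
  refine (choose_le_four_pow_mul_pow (by omega) (by omega) hT).trans ?_
  gcongr
  · omega
  · exact (card_le_card hsub).trans hlarge

lemma two_mul_pow_le_two_mul_choose {k m n : ℕ} (hkn : k * n ≤ m) :
    (2 * k) ^ n ≤ 2 * (m + n).choose n := by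
  rcases n with - | n
  · simp
  have hfact : 2 ^ (n + 1) * (n + 1)! ≤ 2 * (n + 1) ^ (n + 1) :=
    calc 2 ^ (n + 1) * (n + 1)! = 2 * (n + 1) * (2 ^ n * n !) := by
          rw [Nat.factorial_succ]; ring
      _ ≤ 2 * (n + 1) * (n + 1) ^ n := by gcongr; exact two_pow_mul_factorial_le n
      _ = 2 * (n + 1) ^ (n + 1) := by ring
  have hasc : m ^ (n + 1) ≤ (n + 1)! * (m + (n + 1)).choose (n + 1) := by
    rw [← Nat.ascFactorial_eq_factorial_mul_choose]
    exact (Nat.pow_le_pow_left m.le_succ _).trans (Nat.pow_succ_le_ascFactorial _ _)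
  refine Nat.le_of_mul_le_mul_left ?_ (Nat.factorial_pos (n + 1))
  calc (n + 1)! * (2 * k) ^ (n + 1) = k ^ (n + 1) * (2 ^ (n + 1) * (n + 1)!) := by ring
    _ ≤ k ^ (n + 1) * (2 * (n + 1) ^ (n + 1)) := by gcongr
    _ = 2 * (k * (n + 1)) ^ (n + 1) := by rw [mul_pow]; ring
    _ ≤ 2 * m ^ (n + 1) := by gcongr
    _ ≤ 2 * ((n + 1)! * (m + (n + 1)).choose (n + 1)) := by gcongr
    _ = (n + 1)! * (2 * (m + (n + 1)).choose (n + 1)) := by ring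

-- Up to `d = 2 * n / 3` each unit increase of `d` multiplies the binomial coefficient by at
-- least `8 / 5`, and `4 ≤ (8 / 5) ^ 3`.
lemma four_pow_le_two_mul_self_mul_choose_pow_three {n d : ℕ} (hn : 0 < n) (hd : 3 * d ≤ 2 * n) :
    4 ^ (3 * n + d) ≤ (2 * n * (2 * n + d).choose n) ^ 3 := by
  induction d with
  | zero =>
    rw [Nat.add_zero, Nat.add_zero, mul_comm 3, pow_mul, ← Nat.centralBinom_eq_two_mul_choose]
    exact Nat.pow_le_pow_left (Nat.four_pow_le_two_mul_self_mul_centralBinom n hn) 3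
  | succ d ih =>
    have hchoose := Nat.choose_mul_succ_eq (2 * n + d) n
    rw [show 2 * n + d + 1 - n = n + d + 1 by omega] at hchoose
    have hratio : 4 * (n + d + 1) ^ 3 ≤ (2 * n + d + 1) ^ 3 := by
      have h85 : (8 * (n + d + 1)) ^ 3 ≤ (5 * (2 * n + d + 1)) ^ 3 :=
        Nat.pow_le_pow_left (by omega) 3
      rw [mul_pow, mul_pow] at h85
      omega
    refine Nat.le_of_mul_le_mul_right ?_ (pow_pos (n + d).succ_pos 3)
    calc 4 ^ (3 * n + (d + 1)) * (n + d + 1) ^ 3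
        = 4 ^ (3 * n + d) * (4 * (n + d + 1) ^ 3) := by rw [← add_assoc, pow_succ, mul_assoc]
      _ ≤ (2 * n * (2 * n + d).choose n) ^ 3 * (2 * n + d + 1) ^ 3 :=
          Nat.mul_le_mul (ih (by omega)) hratio
      _ = (2 * n * ((2 * n + d).choose n * (2 * n + d + 1))) ^ 3 := by ring
      _ = (2 * n * ((2 * n + d + 1).choose n * (n + d + 1))) ^ 3 := by rw [hchoose]
      _ = (2 * n * (2 * n + (d + 1)).choose n) ^ 3 * (n + d + 1) ^ 3 := by
          rw [← add_assoc, ← mul_assoc, mul_pow]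

lemma log_pow_primeCounting_sqrt_le (N : ℕ) :
    Real.log ((N : ℝ) ^ (π N.sqrt + 1)) ≤ (√N / 2 + 2) * Real.log N := by
  rw [Real.log_pow]
  gcongr
  calc ((π N.sqrt + 1 : ℕ) : ℝ) ≤ (N.sqrt / 2 + 1 + 1 : ℕ) := by
        exact_mod_cast Nat.succ_le_succ (primeCounting_le_half_add_one N.sqrt)
    _ = ((N.sqrt / 2 : ℕ) : ℝ) + 2 := by push_cast; ring
    _ ≤ √N / 2 + 2 := by
        gcongr
        exact Nat.cast_div_le.trans
          (div_le_div_of_nonneg_right Real.nat_sqrt_le_real_sqrt zero_le_two)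

lemma log_le_mul_log_two_add (k : ℕ) {x : ℝ} (hx : 0 < x) :
    Real.log x ≤ k * Real.log 2 + x / 2 ^ k - 1 := by
  have h := Real.log_le_sub_one_of_pos (div_pos hx (pow_pos two_pos k))
  rw [Real.log_div hx.ne' (by positivity), Real.log_pow] at h
  linarith

lemma log_pow_primeCounting_sqrt_le_of_two_mul_le_pow_six {N : ℕ} {u : ℝ} (hN : 0 < N)
    (hu : 0 < u) (hNu : 2 * N ≤ u ^ 6) :
    Real.log ((N : ℝ) ^ (π N.sqrt + 1)) ≤ (3 / 8 * u ^ 3 + 2) * (5.79 + 3 / 4 * u) := by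
  have hsqrt : √N ≤ 3 / 4 * u ^ 3 := by
    rw [Real.sqrt_le_left (by positivity), mul_pow, ← pow_mul]
    linarith
  have hlogN : Real.log N ≤ 5.79 + 3 / 4 * u := by
    have h2N : Real.log (2 * N) ≤ Real.log (u ^ 6) := Real.log_le_log (by positivity) hNu
    rw [Real.log_mul two_ne_zero (by positivity), Real.log_pow] at h2N
    have hlogu := log_le_mul_log_two_add 3 hu
    norm_num at h2N hlogu
    linarith [Real.log_two_lt_d9]
  refine (log_pow_primeCounting_sqrt_le N).trans ?_
  gcongr
  linarith

lemma two_mul_pow_primeCounting_sqrt_lt_two_pow {n N : ℕ} (hn : 2 ^ 11 ≤ n) (hN : 0 < N)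
    (hNn : 4 * N ^ 2 ≤ n ^ 3) : 2 * N ^ (π N.sqrt + 1) < 2 ^ n := by
  obtain ⟨u, hu0, hun⟩ : ∃ u : ℝ, 0 ≤ u ∧ u ^ 4 = n :=
    ⟨√√n, by positivity, by rw [pow_mul _ 2 2]; simp [Real.sq_sqrt]⟩
  have hu : 6.7 ≤ u := by
    refine le_of_pow_le_pow_left₀ four_ne_zero hu0 (hun ▸ ?_)
    exact le_trans (by norm_num) (Nat.cast_le.mpr hn)
  have hNu : 2 * (N : ℝ) ≤ u ^ 6 := by
    refine le_of_pow_le_pow_left₀ two_ne_zero (by positivity) ?_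
    calc (2 * (N : ℝ)) ^ 2 = 4 * (N : ℝ) ^ 2 := by ring
      _ ≤ (n : ℝ) ^ 3 := by exact_mod_cast hNn
      _ = (u ^ 6) ^ 2 := by rw [← hun]; ring
  have hlog := log_pow_primeCounting_sqrt_le_of_two_mul_le_pow_six hN (by linarith) hNu
  have hpoly : 0.7 + (3 / 8 * u ^ 3 + 2) * (5.79 + 3 / 4 * u) < u ^ 4 * 0.693 := by
    nlinarith [mul_le_mul_of_nonneg_left hu (pow_nonneg hu0 3),
      mul_le_mul_of_nonneg_left hu (pow_nonneg hu0 2), mul_le_mul_of_nonneg_left hu hu0]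
  have hlog2 : u ^ 4 * 0.693 ≤ u ^ 4 * Real.log 2 := by
    gcongr
    linarith [Real.log_two_gt_d9]
  suffices (2 * N ^ (π N.sqrt + 1) : ℝ) < 2 ^ n by exact_mod_cast this
  rw [← Real.log_lt_log_iff (by positivity) (by positivity), Real.log_pow,
    Real.log_mul two_ne_zero (by positivity), ← hun]
  linarith [Real.log_two_lt_d9]

lemma log_two_mul_mul_pow_primeCounting_sqrt_le {n N : ℕ} (hN : 0 < N) (hNn : N ≤ 5 * n) :
    Real.log (2 * n * N ^ (π N.sqrt + 1)) ≤
      7.02 + √n / 32 + (9 / 8 * √n + 2) * (8.4 + √n / 32) := by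
  have hn0 : (0 : ℝ) < n := by exact_mod_cast (by omega : 0 < n)
  have hNn' : (N : ℝ) ≤ 5 * n := by exact_mod_cast hNn
  have hlog2 := Real.log_two_lt_d9
  have hlogn : Real.log n ≤ 12 * Real.log 2 + √n / 32 - 2 := by
    have := log_le_mul_log_two_add 6 (Real.sqrt_pos.mpr hn0)
    rw [Real.log_sqrt hn0.le] at this
    norm_num at this
    linarith
  have hlogN : Real.log N ≤ 8.4 + √n / 32 := by
    have h8 : Real.log N ≤ Real.log (2 ^ 3 * n) :=
      Real.log_le_log (by positivity) (by linarith)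
    rw [Real.log_mul (by positivity) hn0.ne', Real.log_pow] at h8
    push_cast at h8
    linarith
  have hsqrt : √N ≤ 9 / 4 * √n := by
    rw [Real.sqrt_le_left (by positivity), mul_pow, Real.sq_sqrt hn0.le]
    linarith
  rw [Real.log_mul (by positivity) (by positivity), Real.log_mul two_ne_zero hn0.ne']
  refine add_le_add (by linarith) ((log_pow_primeCounting_sqrt_le N).trans ?_)
  gcongr
  linarith

lemma two_mul_mul_pow_primeCounting_sqrt_pow_three_lt {n N : ℕ} (hn : 2 ^ 11 ≤ n) (hN : 0 < N)
    (hNn : N ≤ 5 * n) : (2 * n * N ^ (π N.sqrt + 1)) ^ 3 < 4 ^ (2 * n / 3) := by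
  have hsq : √(n : ℝ) ^ 2 = n := Real.sq_sqrt n.cast_nonneg
  have hsqrt : 45 ≤ √(n : ℝ) :=
    Real.le_sqrt_of_sq_le (le_trans (by norm_num) (Nat.cast_le.mpr hn))
  have hfloor : (2 * n - 2 : ℝ) / 3 ≤ (2 * n / 3 : ℕ) := by
    have : 2 * n ≤ 3 * (2 * n / 3) + 2 := by omega
    have : (2 * n : ℝ) ≤ 3 * (2 * n / 3 : ℕ) + 2 := by exact_mod_cast this
    linarith
  have hlog4 : (2 * n - 2) / 3 * 1.386 ≤ (2 * n / 3 : ℕ) * Real.log 4 := by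
    have : Real.log 4 = 2 * Real.log 2 := by
      rw [show (4 : ℝ) = 2 ^ 2 by norm_num, Real.log_pow, Nat.cast_two]
    gcongr
    linarith [Real.log_two_gt_d9]
  suffices ((2 * n * N ^ (π N.sqrt + 1)) ^ 3 : ℝ) < 4 ^ (2 * n / 3) by exact_mod_cast this
  rw [← Real.log_lt_log_iff (by positivity) (by positivity), Real.log_pow, Real.log_pow]
  refine lt_of_lt_of_le ?_ hlog4
  have hlog := log_two_mul_mul_pow_primeCounting_sqrt_le hN hNn
  push_cast
  nlinarith

lemma two_pow_eleven_le_of_two_pow_fifteen_lt {m n : ℕ} (hm : 2 ^ 15 < m)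
    (hmn : 8 * (m + 1) ^ 2 ≤ n ^ 3) : 2 ^ 11 ≤ n := by
  by_contra! hn
  have hn3 := Nat.pow_le_pow_left hn.le 3
  have hm2 := Nat.pow_lt_pow_left (by omega : 2 ^ 15 < m + 1) two_ne_zero
  omega

lemma one_lt_card_largePrimeFactors_of_four_mul_le {m n : ℕ} (hn : 2 ^ 11 ≤ n)
    (hnm : 4 * n ≤ m) : 1 < #(largePrimeFactors m n) := by
  by_contra! hlarge
  have hmn3 := eight_mul_succ_sq_le_pow_three (by omega) hlarge
  have hN : 4 * (m + n) ^ 2 ≤ n ^ 3 := by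
    have h54 : (4 * (m + n)) ^ 2 ≤ (5 * (m + 1)) ^ 2 := Nat.pow_le_pow_left (by omega) 2
    rw [mul_pow, mul_pow] at h54
    omega
  refine (two_mul_pow_primeCounting_sqrt_lt_two_pow hn (by omega) hN).not_ge ?_
  refine Nat.le_of_mul_le_mul_left ?_ (pow_pos four_pos n)
  calc 4 ^ n * 2 ^ n = (2 * 4) ^ n := by rw [← mul_pow, mul_comm 4]
    _ ≤ 2 * (m + n).choose n := two_mul_pow_le_two_mul_choose hnm
    _ ≤ 2 * (4 ^ n * (m + n) ^ (π (m + n).sqrt + 1)) := by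
        gcongr
        exact choose_le_of_card_largePrimeFactors_le_one (by omega) hlarge fun _ _ h ↦ h
    _ = 4 ^ n * (2 * (m + n) ^ (π (m + n).sqrt + 1)) := by ring

lemma le_div_three_of_mem_primeFactors_choose {N k p : ℕ} (hk : 2 * k ≤ N) (hN : 8 ≤ N)
    (hp : p ∈ (N.choose k).primeFactors) (hpk : p ≤ k) : p ≤ N / 3 := by
  by_contra! h
  have hfact := Nat.factorization_choose_of_lt_three_mul (n := N) (k := k) (p := p)
    (by omega) hpk (by omega) (by omega)
  rw [← Nat.support_factorization, Finsupp.mem_support_iff] at hp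
  exact hp hfact

lemma one_lt_card_largePrimeFactors_of_lt_four_mul {m n : ℕ} (hn : 2 ^ 11 ≤ n) (hnm : n ≤ m)
    (hmn : m < 4 * n) : 1 < #(largePrimeFactors m n) := by
  by_contra! hlarge
  set R := (m + n) ^ (π (m + n).sqrt + 1)
  suffices 4 ^ (2 * n / 3) ≤ (2 * n * R) ^ 3 from
    (two_mul_mul_pow_primeCounting_sqrt_pow_three_lt hn (by omega) (by omega)).not_ge this
  obtain ⟨T, d, hTd, hd, hdm, hT⟩ : ∃ T d, 3 * T + 2 * n / 3 ≤ 3 * n + d ∧ 3 * d ≤ 2 * n ∧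
      2 * n + d ≤ m + n ∧ ∀ p ∈ ((m + n).choose n).primeFactors, p ≤ n → p ≤ T := by
    rcases le_total (3 * (m + n)) (8 * n) with h | h
    · exact ⟨(m + n) / 3, m - n, by omega, by omega, by omega, fun p ↦
        le_div_three_of_mem_primeFactors_choose (by omega) (by omega)⟩
    · exact ⟨n, 2 * n / 3, by omega, by omega, by omega, fun p _ hp ↦ hp⟩
  refine Nat.le_of_mul_le_mul_left ?_ (pow_pos four_pos (3 * T))
  calc 4 ^ (3 * T) * 4 ^ (2 * n / 3) = 4 ^ (3 * T + 2 * n / 3) := (pow_add _ _ _).symm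
    _ ≤ 4 ^ (3 * n + d) := Nat.pow_le_pow_right four_pos hTd
    _ ≤ (2 * n * (2 * n + d).choose n) ^ 3 :=
        four_pow_le_two_mul_self_mul_choose_pow_three (by omega) hd
    _ ≤ (2 * n * (4 ^ T * R)) ^ 3 := by
        gcongr
        exact (Nat.choose_mono n hdm).trans
          (choose_le_of_card_largePrimeFactors_le_one (by omega) hlarge hT)
    _ = 4 ^ (3 * T) * (2 * n * R) ^ 3 := by rw [pow_mul']; ring

/-- For `m ≥ n ≥ 6`, `P(m,n)` is divisible by at least two distinct primes
strictly greater than `n`. -/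
theorem stmt_12 (m n : ℕ) (hmn : m ≥ n) (hn : n ≥ 6) :
    ((P m n).primeFactors.filter (fun p => n < p)).card ≥ 2 := by
  change 1 < #(largePrimeFactors m n)
  rcases lt_or_ge n 48 with hn48 | hn48
  · exact one_lt_card_largePrimeFactors_of_lt_48 hmn hn hn48
  rcases le_or_gt m (2 ^ 15) with hm | hm
  · exact one_lt_card_largePrimeFactors_of_le_two_pow hmn hn48 hm
  by_contra! hlarge
  have hmn3 := eight_mul_succ_sq_le_pow_three hn48 hlarge
  have hn11 := two_pow_eleven_le_of_two_pow_fifteen_lt hm hmn3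
  rcases le_or_gt (4 * n) m with hnm | hnm
  · exact hlarge.not_gt (one_lt_card_largePrimeFactors_of_four_mul_le hn11 hnm)
  · exact hlarge.not_gt (one_lt_card_largePrimeFactors_of_lt_four_mul hn11 hmn hnm)
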